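/- arXiv:1304.0947 — 4 statements merged into one kernel-verified Lean document; each statement's English description precedes it below -/
import Mathlib

section
/- Let S be a complex 2×2 matrix. The four matrices I (identity), S, S*, S*S are linearly dependent over ℂ if and only if S is normal (S commutes with its adjoint S*). -/
open MvPolynomial Complex Matrix MeasureTheory ComplexOrder

noncomputable section

universe u

/-- `ℂ[z,z̄]`: the polynomial ring in the `2n` variables `z_j` (encoded `Sum.inl j`)
and `z̄_j` (encoded `Sum.inr j`). -/
abbrev CPoly (n : ℕ) := MvPolynomial (Fin n ⊕ Fin n) ℂ

/-- The involution `f ↦ f*`: conjugate the coefficients and swap `z_j ↔ z̄_j`. -/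
def hermStar (n : ℕ) : CPoly n →+* CPoly n :=
  (MvPolynomial.rename (Sum.swap : Fin n ⊕ Fin n → Fin n ⊕ Fin n)).toRingHom.comp
    (MvPolynomial.map (starRingEnd ℂ))

/-- The inclusion of the holomorphic polynomials `ℂ[z]` into `ℂ[z,z̄]`. -/
def hol (n : ℕ) : MvPolynomial (Fin n) ℂ →ₐ[ℂ] CPoly n :=
  MvPolynomial.rename Sum.inl

/-- Evaluation `f(a,b)` (substituting `a` for `z` and `b` for `z̄`). -/
def evalPair {n : ℕ} (a b : Fin n → ℂ) (f : CPoly n) : ℂ :=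
  MvPolynomial.eval (Sum.elim a b) f

/-- Evaluation `f(a) := f(a, ā)`. -/
def evalAt {n : ℕ} (a : Fin n → ℂ) (f : CPoly n) : ℂ :=
  evalPair a (fun j => (starRingEnd ℂ) (a j)) f

/-- `‖z‖² = |z_1|² + ⋯ + |z_n|²`. -/
def normZ (n : ℕ) : CPoly n := ∑ j : Fin n, X (Sum.inl j) * X (Sum.inr j)

/-- `Σ_h`: hermitian sums of squares `∑ |p_i|²`, `p_i ∈ ℂ[z]` holomorphic. -/
def SigmaH (n : ℕ) : Set (CPoly n) :=
  {f | ∃ (k : ℕ) (p : Fin k → MvPolynomial (Fin n) ℂ),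
    f = ∑ i, hol n (p i) * hermStar n (hol n (p i))}

/-- `Σ`: sums of squares `∑ |p_i|²`, `p_i ∈ ℂ[z,z̄]`. -/
def SigmaFull (n : ℕ) : Set (CPoly n) :=
  {f | ∃ (k : ℕ) (p : Fin k → CPoly n), f = ∑ i, p i * hermStar n (p i)}

/-- Ideals `I ⊆ ℝ[x,y]`, viewed as sets of `*`-fixed elements of `ℂ[z,z̄]`. -/
def IsRealIdeal (n : ℕ) (I : Set (CPoly n)) : Prop :=
  (∀ f ∈ I, hermStar n f = f) ∧ (0 : CPoly n) ∈ I ∧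
    (∀ f ∈ I, ∀ g ∈ I, f + g ∈ I) ∧
    ∀ f : CPoly n, hermStar n f = f → ∀ g ∈ I, f * g ∈ I

/-- The semiring `Σ_h + I`. -/
def SigmaHPlus (n : ℕ) (I : Set (CPoly n)) : Set (CPoly n) :=
  {f | ∃ s ∈ SigmaH n, ∃ g ∈ I, f = s + g}

/-- The real zero set `V_ℝ(I) ⊆ ℂⁿ`. -/
def VR (n : ℕ) (I : Set (CPoly n)) : Set (Fin n → ℂ) :=
  {a | ∀ f ∈ I, evalAt a f = 0}

/-- A subset `M` of `ℝ[x,y]` is archimedean if for every real `f` there is `c ∈ ℝ`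
with `c ± f ∈ M`. -/
def IsArchSet (n : ℕ) (M : Set (CPoly n)) : Prop :=
  ∀ f : CPoly n, hermStar n f = f →
    ∃ c : ℝ, (C (c : ℂ) + f) ∈ M ∧ (C (c : ℂ) - f) ∈ M

/-- Hermitian modules in `ℝ[x,y]`. -/
def IsHermitianModule (n : ℕ) (M : Set (CPoly n)) : Prop :=
  (∀ f ∈ M, hermStar n f = f) ∧ (1 : CPoly n) ∈ M ∧
    (∀ f ∈ M, ∀ g ∈ M, f + g ∈ M) ∧
    ∀ s ∈ SigmaH n, ∀ f ∈ M, s * f ∈ M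

/-- The closed set `X_M ⊆ ℂⁿ` associated with a hermitian module. -/
def XM (n : ℕ) (M : Set (CPoly n)) : Set (Fin n → ℂ) :=
  {a | ∀ g ∈ M, 0 ≤ (evalAt a g).re}

/-- Hereditary calculus `ψ_T` for a tuple of bounded operators:
`ψ_T(z^α z̄^β) = T^{*β} T^α` (adjoints to the left). -/
def psiOp {n : ℕ} {E : Type u} [NormedAddCommGroup E] [InnerProductSpace ℂ E]
    [CompleteSpace E] (T : Fin n → E →L[ℂ] E) (f : CPoly n) : E →L[ℂ] E :=
  ∑ m ∈ f.support, f.coeff m •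
    ((List.ofFn fun j => (ContinuousLinearMap.adjoint (T j)) ^ (m (Sum.inr j))).prod *
     (List.ofFn fun j => (T j) ^ (m (Sum.inl j))).prod)

/-- Hereditary calculus `ψ_T` for a tuple of matrices. -/
def psiMat {n m : ℕ} (T : Fin n → Matrix (Fin m) (Fin m) ℂ) (f : CPoly n) :
    Matrix (Fin m) (Fin m) ℂ :=
  ∑ mo ∈ f.support, f.coeff mo •
    ((List.ofFn fun j => ((T j)ᴴ) ^ (mo (Sum.inr j))).prod *
     (List.ofFn fun j => (T j) ^ (mo (Sum.inl j))).prod)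

/-- A commuting tuple `T` on a Hilbert space `E` is subnormal if it extends to a
commuting tuple of bounded normal operators on a larger Hilbert space `E'`,
leaving (the image of) `E` invariant. -/
def IsSubnormal {n : ℕ} {E : Type u} [NormedAddCommGroup E] [InnerProductSpace ℂ E]
    [CompleteSpace E] (T : Fin n → E →L[ℂ] E) : Prop :=
  ∃ (E' : Type u) (_ : NormedAddCommGroup E') (_ : InnerProductSpace ℂ E')
    (_ : CompleteSpace E') (ι : E →ₗᵢ[ℂ] E') (N : Fin n → E' →L[ℂ] E'),
      (∀ i j, Commute (N i) (N j)) ∧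
      (∀ j, Commute (N j) (ContinuousLinearMap.adjoint (N j))) ∧
      ∀ j x, N j (ι x) = ι (T j x)

/-- The "diamond" ideal `I(a,b)`. -/
def Iab {n : ℕ} (a b : Fin n → ℂ) : Set (CPoly n) :=
  {f | evalPair a (fun j => (starRingEnd ℂ) (a j)) f = 0 ∧
       evalPair a (fun j => (starRingEnd ℂ) (b j)) f = 0 ∧
       evalPair b (fun j => (starRingEnd ℂ) (a j)) f = 0 ∧
       evalPair b (fun j => (starRingEnd ℂ) (b j)) f = 0}

/-- The degenerate ideal `J(a,U)`. -/
def Jau {n : ℕ} (a : Fin n → ℂ) (U : Matrix (Fin n) (Fin n) ℂ) : Set (CPoly n) :=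
  {f | evalAt a f = 0 ∧
    U.mulVec (fun k => evalAt a (pderiv (Sum.inl k) f)) = 0 ∧
    (U.map (starRingEnd ℂ)).mulVec (fun k => evalAt a (pderiv (Sum.inr k) f)) = 0 ∧
    Matrix.trace
      (U * Matrix.of fun j k => evalAt a (pderiv (Sum.inr k) (pderiv (Sum.inl j) f))) = 0}

/-! The coordinate determinant of `1, A, B, BA` is `-det [A, B]`, so over a domain these matrices
are dependent exactly when `[A, B]` is singular. The self-commutator `K = [S, Sᴴ]` is hermitian and
traceless, so Cayley–Hamilton gives `Kᴴ K = K² = -(det K) 1`: if `K` is singular, then `Kᴴ K = 0`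
and hence `K = 0`. -/

section Independence

variable {R : Type*} [CommRing R]

lemma linearIndependent_iff_basis_det_mem_nonZeroDivisors {ι M : Type*} [Fintype ι] [DecidableEq ι]
    [AddCommGroup M] [Module R M] (b : Module.Basis ι R M) (v : ι → M) :
    LinearIndependent R v ↔ b.det v ∈ nonZeroDivisors R := by
  have coords_eq_col : b.equivFun ∘ v = (b.toMatrix v).col := rfl
  rw [← LinearMap.linearIndependent_iff b.equivFun.toLinearMap b.equivFun.ker,
    LinearEquiv.coe_coe, coords_eq_col, Matrix.linearIndependent_col_iff,
    Matrix.nonsingular_iff_det_mem_nonZeroDivisors, Module.Basis.det_apply]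

variable (R) in
/-- The standard basis `E₀₀, E₀₁, E₁₀, E₁₁` of the `2 × 2` matrices, enumerated row by row by
`Fin 4` so that its determinant applies to families of four matrices. -/
def rowMajorBasis : Module.Basis (Fin 4) R (Matrix (Fin 2) (Fin 2) R) :=
  (stdBasis R (Fin 2) (Fin 2)).reindex finProdFinEquiv

lemma rowMajorBasis_repr (A : Matrix (Fin 2) (Fin 2) R) :
    ⇑((rowMajorBasis R).repr A) = ![A 0 0, A 0 1, A 1 0, A 1 1] := by
  ext i
  fin_cases i <;> rfl

lemma rowMajorBasis_det_one_mul (A B : Matrix (Fin 2) (Fin 2) R) :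
    (rowMajorBasis R).det ![1, A, B, B * A] = -⁅A, B⁆.det := by
  have coords : (rowMajorBasis R).toMatrix ![1, A, B, B * A] =
      !![1, A 0 0, B 0 0, (B * A) 0 0;
         0, A 0 1, B 0 1, (B * A) 0 1;
         0, A 1 0, B 1 0, (B * A) 1 0;
         1, A 1 1, B 1 1, (B * A) 1 1] := by
    ext i j
    rw [Module.Basis.toMatrix_apply, rowMajorBasis_repr]
    fin_cases i <;> fin_cases j <;> rfl
  -- Clearing the first column leaves the coordinates modulo scalar matrices.
  calc (rowMajorBasis R).det ![1, A, B, B * A]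
    _ = det !![A 0 1, B 0 1, (B * A) 0 1;
               A 1 0, B 1 0, (B * A) 1 0;
               A 1 1 - A 0 0, B 1 1 - B 0 0, (B * A) 1 1 - (B * A) 0 0] := by
      rw [Module.Basis.det_apply, coords, det_succ_column_zero, Fin.sum_univ_four]
      simp only [det_fin_three, submatrix_apply, of_apply, cons_val, Fin.succAbove, Fin.reduceSucc,
        Fin.reduceCastSucc, Fin.reduceLT, lt_self_iff_false, ↓reduceIte, Fin.coe_ofNat_eq_mod]
      ring
    _ = -⁅A, B⁆.det := by
      simp only [Ring.lie_def, det_fin_two, det_fin_three, Matrix.sub_apply, mul_apply,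
        Fin.sum_univ_two, of_apply, cons_val]
      ring

lemma linearIndependent_one_mul_iff_det_lie_mem_nonZeroDivisors (A B : Matrix (Fin 2) (Fin 2) R) :
    LinearIndependent R ![1, A, B, B * A] ↔ ⁅A, B⁆.det ∈ nonZeroDivisors R := by
  rw [linearIndependent_iff_basis_det_mem_nonZeroDivisors (rowMajorBasis R),
    rowMajorBasis_det_one_mul]
  simp only [mem_nonZeroDivisors_iff_right, mul_neg, neg_eq_zero]

end Independence

section SelfCommutator

variable {n R : Type*} [Fintype n]

lemma isHermitian_lie_conjTranspose [NonUnitalRing R] [StarRing R] (A : Matrix n n R) :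
    ⁅A, Aᴴ⁆.IsHermitian :=
  (isHermitian_mul_conjTranspose_self A).sub (isHermitian_conjTranspose_mul_self A)

variable [CommRing R] [DecidableEq n]

lemma sq_eq_trace_smul_sub_det_smul_one (hn : Fintype.card n = 2) (A : Matrix n n R) :
    A ^ 2 = A.trace • A - A.det • 1 := by
  nontriviality R
  have cayley_hamilton := A.aeval_self_charpoly
  rw [A.charpoly_of_card_eq_two hn] at cayley_hamilton
  simp only [map_add, map_sub, map_mul, map_pow, Polynomial.aeval_X, Polynomial.aeval_C,
    Algebra.algebraMap_eq_smul_one, smul_mul_assoc, one_mul] at cayley_hamilton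
  rw [← sub_eq_zero, ← cayley_hamilton]
  abel

variable [NoZeroDivisors R] [PartialOrder R] [StarRing R] [StarOrderedRing R]

lemma eq_zero_of_isHermitian_of_trace_eq_zero_of_det_eq_zero (hn : Fintype.card n = 2)
    {A : Matrix n n R} (hA : A.IsHermitian) (htrace : A.trace = 0) (hdet : A.det = 0) :
    A = 0 := by
  refine conjTranspose_mul_self_eq_zero.mp ?_
  rw [hA.eq, ← sq, sq_eq_trace_smul_sub_det_smul_one hn, htrace, hdet, zero_smul, zero_smul,
    sub_zero]

lemma det_lie_conjTranspose_eq_zero_iff (hn : Fintype.card n = 2) (A : Matrix n n R) :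
    ⁅A, Aᴴ⁆.det = 0 ↔ Commute A Aᴴ := by
  rw [commute_iff_lie_eq]
  constructor
  · exact eq_zero_of_isHermitian_of_trace_eq_zero_of_det_eq_zero hn
      (isHermitian_lie_conjTranspose A) (LieAlgebra.matrix_trace_commutator_zero n R A Aᴴ)
  · intro h
    have : Nonempty n := Fintype.card_pos_iff.mp (hn ▸ two_pos)
    rw [h, det_zero]

end SelfCommutator

theorem statement4_general {R : Type*} [CommRing R] [IsDomain R] [PartialOrder R] [StarRing R]
    [StarOrderedRing R] (S : Matrix (Fin 2) (Fin 2) R) :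
    ¬ LinearIndependent R ![1, S, Sᴴ, Sᴴ * S] ↔ Commute S Sᴴ := by
  rw [linearIndependent_one_mul_iff_det_lie_mem_nonZeroDivisors,
    mem_nonZeroDivisors_iff_ne_zero, not_not,
    det_lie_conjTranspose_eq_zero_iff (Fintype.card_fin 2)]

/-- Lemma `nml2x2`: for a complex `2×2` matrix `S`, the matrices `I, S, S*, S*S` are
linearly dependent iff `S` is normal. -/
theorem statement4 (S : Matrix (Fin 2) (Fin 2) ℂ) :
    ¬ LinearIndependent ℂ ![(1 : Matrix (Fin 2) (Fin 2) ℂ), S, Sᴴ, Sᴴ * S] ↔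
      Commute S Sᴴ := by
  exact statement4_general S

end
end

section
/- A commuting tuple T = (T_1,…,T_n) of complex square matrices is normal if and only if the ideal ker(ψ_T) ⊆ ℂ[z,z̄] is not contained in I(a,b) for any a ≠ b in ℂⁿ, and not contained in J(a,U) for any a ∈ ℂⁿ and any nonzero positive semidefinite hermitian n×n matrix U. -/
open MvPolynomial Complex Matrix MeasureTheory ComplexOrder

noncomputable section

universe u

/-! If `T` is normal, then `T_j* = p_j(T_j)` for some polynomials `p_j`, so `z̄_j - p_j(z_j)` lies
in `ker ψ_T`. If these elements lie in `I(a,b)`, then `p_j(a_j)` equals both `ā_j` and `b̄_j`, so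
`a = b`; if they lie in `J(a,U)`, the antiholomorphic gradient condition gives `U = 0`.

Conversely, suppose that `x` and `y` are killed by all products of two of the operators `T_j - a_j`
and `T_j - b_j` respectively. Then `y* ψ_T(f) x` only involves the value, the two gradients and the
mixed Hessian of `f` at `(a, b̄)`. Joint eigenvectors `x`, `y` that are not orthogonal thus force
`ker ψ_T ⊆ I(a,b)`, and for `a = b`, `x = y` not a joint eigenvector, one gets
`ker ψ_T ⊆ J(a,U)` with `U` the Gram matrix of the vectors `(T_j - a_j) x`. If neither occurs, the
generalized joint eigenspaces of `T` are joint eigenspaces and mutually orthogonal, so `T` is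
normal. -/

section CommutingProducts

variable {M : Type*} [Monoid M] {n : ℕ}

lemma prod_ofFn_mul_of_commute {f g : Fin n → M} (h : ∀ i j, Commute (f i) (g j)) :
    (List.ofFn fun j => f j * g j).prod = (List.ofFn f).prod * (List.ofFn g).prod := by
  induction n with
  | zero => simp
  | succ n ih =>
    have hcomm : Commute (List.ofFn fun j => f (Fin.succ j)).prod (g 0) := by
      refine Commute.list_prod_left _ _ fun x hx => ?_
      obtain ⟨j, rfl⟩ := List.mem_ofFn.mp hx
      exact h _ _
    simp only [List.ofFn_succ, List.prod_cons, ih fun i j => h i.succ j.succ]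
    rw [mul_assoc, mul_assoc, ← mul_assoc (g 0), ← hcomm.eq, mul_assoc]

lemma prod_ofFn_of_forall_ne_eq_one {f : Fin n → M} (i : Fin n) (h : ∀ j, j ≠ i → f j = 1) :
    (List.ofFn f).prod = f i := by
  rw [List.ofFn_eq_map, List.prod_map_eq_pow_single i f fun j hj _ => h j hj,
    List.count_eq_one_of_mem (List.nodup_finRange n) (List.mem_finRange i), pow_one]

lemma prod_ofFn_pow_add_single {S : Fin n → M} (hS : ∀ i j, Commute (S i) (S j))
    (e : Fin n → ℕ) (i : Fin n) :
    (List.ofFn fun j => S j ^ (e j + (Pi.single i 1 : Fin n → ℕ) j)).prod =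
      (List.ofFn fun j => S j ^ e j).prod * S i := by
  have hsingle : (List.ofFn fun j => S j ^ (Pi.single i 1 : Fin n → ℕ) j).prod = S i := by
    rw [prod_ofFn_of_forall_ne_eq_one i fun j hj => by rw [Pi.single_eq_of_ne hj, pow_zero],
      Pi.single_eq_same, pow_one]
  simp only [pow_add]
  rw [prod_ofFn_mul_of_commute fun j k => (hS j k).pow_pow _ _, hsingle]

end CommutingProducts

section NormalElements

lemma exists_star_eq_aeval_of_finite_spectrum {A : Type*} [Ring A] [StarRing A] [TopologicalSpace A]
    [Algebra ℂ A] [ContinuousFunctionalCalculus ℂ A IsStarNormal] {a : A} [IsStarNormal a]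
    (hfin : (spectrum ℂ a).Finite) : ∃ p : Polynomial ℂ, star a = Polynomial.aeval a p := by
  classical
  refine ⟨Lagrange.interpolate hfin.toFinset id star, ?_⟩
  rw [← cfc_polynomial _ a, ← cfc_star_id (R := ℂ) (a := a)]
  refine cfc_congr fun z hz => ?_
  exact (Lagrange.eval_interpolate_at_node star Function.injective_id.injOn
    (hfin.mem_toFinset.mpr hz)).symm

open scoped Matrix.Norms.L2Operator in
lemma exists_conjTranspose_eq_aeval {ι : Type*} [Fintype ι] [DecidableEq ι] {A : Matrix ι ι ℂ}
    (hA : Commute A Aᴴ) : ∃ p : Polynomial ℂ, Aᴴ = Polynomial.aeval A p :=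
  have : IsStarNormal A := ⟨hA.symm⟩
  exists_star_eq_aeval_of_finite_spectrum A.finite_spectrum

variable {R ι κ : Type*} [CommRing R] [StarRing R] [Fintype κ]
  {A : Matrix κ κ R} {μ : ι → R} {W : ι → Submodule R (κ → R)}

lemma star_vecMul_of_orthogonal_eigenspaces (htop : ⨆ i, W i = ⊤)
    (hW : ∀ i, ∀ x ∈ W i, A *ᵥ x = μ i • x)
    (horth : ∀ i j, μ i ≠ μ j → ∀ x ∈ W i, ∀ y ∈ W j, star x ⬝ᵥ y = 0)
    {i : ι} {x : κ → R} (hx : x ∈ W i) : star x ᵥ* A = μ i • star x := by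
  refine dotProduct_eq _ _ fun y => ?_
  have hy : y ∈ ⨆ j, W j := htop ▸ Submodule.mem_top
  induction hy using Submodule.iSup_induction' with
  | mem j y hy =>
    rw [← dotProduct_mulVec, hW j y hy, dotProduct_smul, smul_dotProduct]
    obtain heq | hne := eq_or_ne (μ i) (μ j)
    · rw [heq]
    · simp only [horth i j hne x hx y hy, smul_zero]
  | zero => simp only [dotProduct_zero]
  | add y z _ _ hy hz => rw [dotProduct_add, dotProduct_add, hy, hz]

lemma commute_conjTranspose_of_orthogonal_eigenspaces (htop : ⨆ i, W i = ⊤)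
    (hW : ∀ i, ∀ x ∈ W i, A *ᵥ x = μ i • x)
    (horth : ∀ i j, μ i ≠ μ j → ∀ x ∈ W i, ∀ y ∈ W j, star x ⬝ᵥ y = 0) : Commute A Aᴴ := by
  have hadj : ∀ i, ∀ x ∈ W i, Aᴴ *ᵥ x = star (μ i) • x := fun i x hx => by
    rw [mulVec_conjTranspose, star_vecMul_of_orthogonal_eigenspaces htop hW horth hx, star_smul,
      star_star]
  refine mulVec_injective (funext fun x => ?_)
  have hx : x ∈ ⨆ i, W i := htop ▸ Submodule.mem_top
  induction hx using Submodule.iSup_induction' with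
  | mem i x hx =>
    rw [← mulVec_mulVec, ← mulVec_mulVec, hadj i x hx, hW i x hx, mulVec_smul, mulVec_smul,
      hadj i x hx, hW i x hx, smul_comm]
  | zero => simp only [mulVec_zero]
  | add x y _ _ hx hy => rw [mulVec_add, mulVec_add, hx, hy]

end NormalElements

section JointEigenspaces

variable {ι K V : Type*} [Finite ι]

lemma forall_apply_eq_zero_of_forall_pow_apply_eq_zero [Semiring K] [AddCommMonoid V] [Module K V]
    {N : ι → Module.End K V} (hN : ∀ i j, Commute (N i) (N j))
    (h : ∀ x, (∀ i j, N i (N j x) = 0) → ∀ j, N j x = 0)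
    (d : ι → ℕ) {x : V} (hx : ∀ j, (N j ^ d j) x = 0) (j : ι) : N j x = 0 := by
  classical
  induction d using WellFoundedLT.induction generalizing x j with
  | ind d ih =>
  refine h x (fun i k => ?_) j
  obtain hk | hk := Nat.eq_zero_or_pos (d k)
  · have hx0 : x = 0 := by simpa [hk] using hx k
    simp only [hx0, map_zero]
  -- `N k x` is killed by the same powers as `x`, except that the exponent of `N k` drops by one.
  refine ih (Function.update d k (d k - 1)) (update_lt_self_iff.mpr (by omega))
    (fun l => ?_) i
  obtain rfl | hl := eq_or_ne l k
  · rw [Function.update_self, ← Module.End.mul_apply, ← pow_succ, Nat.sub_add_cancel hk, hx l]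
  · rw [Function.update_of_ne hl, ← Module.End.mul_apply, ((hN l k).pow_left (d l)).eq,
      Module.End.mul_apply, hx l, map_zero]

lemma iSup_iInf_eigenspace_eq_top_of_commute [Field K] [AddCommGroup V] [Module K V]
    [FiniteDimensional K V] {f : ι → Module.End K V} (hf : ∀ i j, Commute (f i) (f j))
    (htop : ∀ i, ⨆ μ, (f i).maxGenEigenspace μ = ⊤)
    (h : ∀ (χ : ι → K) (x : V), (∀ i j, (f i - χ i • 1) ((f j - χ j • 1) x) = 0) →
      ∀ j, (f j - χ j • 1) x = 0) :
    ⨆ χ : ι → K, ⨅ i, (f i).eigenspace (χ i) = ⊤ := by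
  open Module.End in
  rw [eq_top_iff,
    ← iSup_iInf_maxGenEigenspace_eq_top_of_iSup_maxGenEigenspace_eq_top_of_commute f
      (fun i j _ => hf i j) htop]
  refine iSup_mono fun χ x hx => ?_
  rw [Module.End.mem_iInf_maxGenEigenspace_iff] at hx
  choose d hd using hx
  have hcomm : ∀ i j, Commute (f i - χ i • 1) (f j - χ j • 1) := fun i j =>
    ((hf i j).sub_right ((Commute.one_right _).smul_right _)).sub_left
      ((Commute.one_left _).smul_left _)
  refine (Submodule.mem_iInf _).mpr fun i => Module.End.mem_eigenspace_iff.mpr ?_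
  simpa [sub_eq_zero] using forall_apply_eq_zero_of_forall_pow_apply_eq_zero hcomm (h χ) d hd i

end JointEigenspaces

section MatrixColumns

lemma exists_col_ne_zero {ι κ R : Type*} [Zero R] {A : Matrix ι κ R} (hA : A ≠ 0) :
    ∃ k, A.col k ≠ 0 := by
  by_contra! h
  exact hA (ext_col h)

variable {ι κ ν R : Type*} [CommRing R]

lemma trace_mul_mul_vecMulVec [Fintype ι] [Fintype κ] [Fintype ν] (A : Matrix ι κ R)
    (B : Matrix κ ν R) (u : ν → R) (v : ι → R) :
    trace (A * B * vecMulVec u v) = (v ᵥ* A) ⬝ᵥ (B *ᵥ u) := by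
  rw [mul_vecMulVec, trace_vecMulVec, dotProduct_comm, ← mulVec_mulVec, dotProduct_mulVec]

lemma single_one_vecMul_conjTranspose [StarRing R] [Fintype κ] [DecidableEq κ]
    (A : Matrix ι κ R) (i : κ) : Pi.single i 1 ᵥ* Aᴴ = star (A.col i) :=
  single_one_vecMul ..

end MatrixColumns

section HereditaryCalculus

variable {n : ℕ} {κ : Type*} [Fintype κ] [DecidableEq κ]

/-- The matrix `T^{*β} T^α` attached to the exponent `(α, β)` of a monomial `z^α z̄^β`. -/
def hereditaryMonomial (T : Fin n → Matrix κ κ ℂ) (e : Fin n ⊕ Fin n →₀ ℕ) : Matrix κ κ ℂ :=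
  (List.ofFn fun j => (T j)ᴴ ^ e (Sum.inr j)).prod * (List.ofFn fun j => T j ^ e (Sum.inl j)).prod

/-- The hereditary calculus `ψ_T` as a linear map, so that `ker ψ_T` is its kernel. -/
def hereditaryCalculus (T : Fin n → Matrix κ κ ℂ) : CPoly n →ₗ[ℂ] Matrix κ κ ℂ :=
  (basisMonomials _ ℂ).constr ℂ (hereditaryMonomial T)

lemma hereditaryCalculus_apply {m : ℕ} (T : Fin n → Matrix (Fin m) (Fin m) ℂ) (f : CPoly n) :
    hereditaryCalculus T f = psiMat T f := by
  rw [hereditaryCalculus, Module.Basis.constr_apply]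
  exact sum_def

lemma coe_ker_hereditaryCalculus {m : ℕ} (T : Fin n → Matrix (Fin m) (Fin m) ℂ) :
    (LinearMap.ker (hereditaryCalculus T) : Set (CPoly n)) = {f | psiMat T f = 0} :=
  Set.ext fun f => by rw [SetLike.mem_coe, LinearMap.mem_ker, hereditaryCalculus_apply]; rfl

variable {T : Fin n → Matrix κ κ ℂ}

lemma hereditaryCalculus_monomial (e : Fin n ⊕ Fin n →₀ ℕ) (c : ℂ) :
    hereditaryCalculus T (monomial e c) = c • hereditaryMonomial T e := by
  have hbasis : monomial e c = c • basisMonomials (Fin n ⊕ Fin n) ℂ e := by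
    rw [coe_basisMonomials, smul_monomial, smul_eq_mul, mul_one]
  rw [hbasis, map_smul, hereditaryCalculus, Module.Basis.constr_basis]

lemma hereditaryCalculus_C (c : ℂ) : hereditaryCalculus T (C c) = c • 1 := by
  rw [C_apply, hereditaryCalculus_monomial]
  simp [hereditaryMonomial, List.ofFn_const]

lemma hereditaryMonomial_add_single_inl (hT : ∀ i j, Commute (T i) (T j))
    (e : Fin n ⊕ Fin n →₀ ℕ) (i : Fin n) :
    hereditaryMonomial T (e + Finsupp.single (Sum.inl i) 1) = hereditaryMonomial T e * T i := by
  have hinl : ∀ j, Finsupp.single (Sum.inl i : Fin n ⊕ Fin n) 1 (Sum.inl j) =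
      (Pi.single i 1 : Fin n → ℕ) j := fun j => by
    simp [Finsupp.single_apply, Pi.single_apply, eq_comm]
  simp only [hereditaryMonomial, Finsupp.add_apply, hinl, prod_ofFn_pow_add_single hT, mul_assoc]
  simp

lemma hereditaryMonomial_add_single_inr (hT : ∀ i j, Commute (T i) (T j))
    (e : Fin n ⊕ Fin n →₀ ℕ) (i : Fin n) :
    hereditaryMonomial T (e + Finsupp.single (Sum.inr i) 1) =
      (T i)ᴴ * hereditaryMonomial T e := by
  have hTstar : ∀ i j, Commute (T i)ᴴ (T j)ᴴ := fun i j => (hT i j).star_star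
  have hinr : ∀ j, Finsupp.single (Sum.inr i : Fin n ⊕ Fin n) 1 (Sum.inr j) =
      (Pi.single i 1 : Fin n → ℕ) j := fun j => by
    simp [Finsupp.single_apply, Pi.single_apply, eq_comm]
  have hcomm : Commute (List.ofFn fun j => (T j)ᴴ ^ e (Sum.inr j)).prod (T i)ᴴ := by
    refine Commute.list_prod_left _ _ fun A hA => ?_
    obtain ⟨j, rfl⟩ := List.mem_ofFn.mp hA
    exact (hTstar j i).pow_left _
  simp only [hereditaryMonomial, Finsupp.add_apply, hinr, prod_ofFn_pow_add_single hTstar,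
    hcomm.eq, mul_assoc]
  simp

lemma hereditaryCalculus_mul_X_inl (hT : ∀ i j, Commute (T i) (T j)) (f : CPoly n) (i : Fin n) :
    hereditaryCalculus T (f * X (Sum.inl i)) = hereditaryCalculus T f * T i := by
  induction f using MvPolynomial.induction_on' with
  | monomial e c =>
    rw [X, monomial_mul, mul_one, hereditaryCalculus_monomial, hereditaryCalculus_monomial,
      hereditaryMonomial_add_single_inl hT, smul_mul_assoc]
  | add p q hp hq => rw [add_mul, map_add, map_add, hp, hq, add_mul]

lemma hereditaryCalculus_mul_X_inr (hT : ∀ i j, Commute (T i) (T j)) (f : CPoly n) (i : Fin n) :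
    hereditaryCalculus T (f * X (Sum.inr i)) = (T i)ᴴ * hereditaryCalculus T f := by
  induction f using MvPolynomial.induction_on' with
  | monomial e c =>
    rw [X, monomial_mul, mul_one, hereditaryCalculus_monomial, hereditaryCalculus_monomial,
      hereditaryMonomial_add_single_inr hT, mul_smul_comm]
  | add p q hp hq => rw [add_mul, map_add, map_add, hp, hq, mul_add]

lemma hereditaryCalculus_X_inr (hT : ∀ i j, Commute (T i) (T j)) (j : Fin n) :
    hereditaryCalculus T (X (Sum.inr j)) = (T j)ᴴ := by
  rw [← one_mul (X _), ← C_1, hereditaryCalculus_mul_X_inr hT, hereditaryCalculus_C, one_smul,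
    mul_one]

lemma hereditaryCalculus_aeval_X_inl (hT : ∀ i j, Commute (T i) (T j)) (j : Fin n)
    (p : Polynomial ℂ) :
    hereditaryCalculus T (Polynomial.aeval (X (Sum.inl j)) p) = Polynomial.aeval (T j) p := by
  induction p using Polynomial.induction_on with
  | C c =>
    rw [Polynomial.aeval_C, Polynomial.aeval_C, algebraMap_eq, hereditaryCalculus_C,
      Algebra.algebraMap_eq_smul_one]
  | add p q hp hq => rw [map_add, map_add, hp, hq, map_add]
  | monomial k c h =>
    rw [pow_succ, ← mul_assoc, map_mul, Polynomial.aeval_X, hereditaryCalculus_mul_X_inl hT, h,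
      map_mul _ (_ * _), Polynomial.aeval_X]

end HereditaryCalculus

section NormalTuples

variable {n : ℕ} {κ : Type*} [Fintype κ] [DecidableEq κ] {T : Fin n → Matrix κ κ ℂ}

lemma exists_X_inr_sub_aeval_mem_ker (hT : ∀ i j, Commute (T i) (T j)) {j : Fin n}
    (hj : Commute (T j) (T j)ᴴ) :
    ∃ p : Polynomial ℂ, X (Sum.inr j) - Polynomial.aeval (X (Sum.inl j)) p ∈
      LinearMap.ker (hereditaryCalculus T) := by
  obtain ⟨p, hp⟩ := exists_conjTranspose_eq_aeval hj
  refine ⟨p, LinearMap.mem_ker.mpr ?_⟩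
  rw [map_sub, hereditaryCalculus_X_inr hT, hereditaryCalculus_aeval_X_inl hT, hp, sub_self]

lemma evalPair_X_inr_sub_aeval (a b : Fin n → ℂ) (j : Fin n) (p : Polynomial ℂ) :
    evalPair a b (X (Sum.inr j) - Polynomial.aeval (X (Sum.inl j)) p) = b j - p.eval (a j) := by
  have haeval := Polynomial.aeval_algHom_apply (aeval (Sum.elim a b)) (X (Sum.inl j)) p
  rw [aeval_X, Sum.elim_inl, Polynomial.coe_aeval_eq_eval] at haeval
  rw [evalPair, map_sub, eval_X, Sum.elim_inr]
  exact congrArg (b j - ·) haeval.symm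

lemma pderiv_inr_X_inr_sub_aeval (j k : Fin n) (p : Polynomial ℂ) :
    pderiv (Sum.inr k) (X (Sum.inr j) - Polynomial.aeval (X (Sum.inl j)) p : CPoly n) =
      (Pi.single j 1 : Fin n → CPoly n) k := by
  simp [Derivation.map_aeval, pderiv_X, Pi.single_apply, @eq_comm _ j k]

lemma eq_of_X_inr_sub_aeval_mem_Iab {a b : Fin n → ℂ} {j : Fin n} {p : Polynomial ℂ}
    (h : X (Sum.inr j) - Polynomial.aeval (X (Sum.inl j)) p ∈ Iab a b) : a j = b j := by
  obtain ⟨haa, hab, -, -⟩ := h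
  rw [evalPair_X_inr_sub_aeval, sub_eq_zero] at haa hab
  exact (starRingEnd ℂ).injective (haa.trans hab.symm)

lemma apply_eq_zero_of_X_inr_sub_aeval_mem_Jau {a : Fin n → ℂ} {U : Matrix (Fin n) (Fin n) ℂ}
    {j : Fin n} {p : Polynomial ℂ}
    (h : X (Sum.inr j) - Polynomial.aeval (X (Sum.inl j)) p ∈ Jau a U) (i : Fin n) :
    U i j = 0 := by
  obtain ⟨-, -, hgrad, -⟩ := h
  have hsingle : (fun k => evalAt a ((Pi.single j 1 : Fin n → CPoly n) k)) = Pi.single j 1 := by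
    ext k
    simp [evalAt, evalPair, Pi.single_apply, apply_ite (eval _)]
  simp only [pderiv_inr_X_inr_sub_aeval, hsingle] at hgrad
  simpa using congrFun hgrad i

end NormalTuples

section Derivatives

variable {n : ℕ}

/-- The holomorphic gradient `∇_z f (c, d)`. -/
def holGrad (c d : Fin n → ℂ) (f : CPoly n) : Fin n → ℂ :=
  fun j => evalPair c d (pderiv (Sum.inl j) f)

/-- The antiholomorphic gradient `∇_z̄ f (c, d)`. -/
def antiholGrad (c d : Fin n → ℂ) (f : CPoly n) : Fin n → ℂ :=
  fun k => evalPair c d (pderiv (Sum.inr k) f)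

/-- The mixed Hessian `∇²_{zz̄} f (c, d)`. -/
def mixedHessian (c d : Fin n → ℂ) (f : CPoly n) : Matrix (Fin n) (Fin n) ℂ :=
  Matrix.of fun j k => evalPair c d (pderiv (Sum.inr k) (pderiv (Sum.inl j) f))

variable (c d : Fin n → ℂ) (f g : CPoly n)

lemma evalPair_mul_X_inl (i : Fin n) : evalPair c d (f * X (Sum.inl i)) = c i * evalPair c d f := by
  simp [evalPair, mul_comm]

lemma evalPair_mul_X_inr (i : Fin n) : evalPair c d (f * X (Sum.inr i)) = d i * evalPair c d f := by
  simp [evalPair, mul_comm]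

lemma holGrad_mul_X_inl (i : Fin n) :
    holGrad c d (f * X (Sum.inl i)) = c i • holGrad c d f + evalPair c d f • Pi.single i 1 := by
  ext j
  simp [holGrad, evalPair, pderiv_X, Pi.single_apply, apply_ite (eval _), @eq_comm _ i, add_comm]

lemma holGrad_mul_X_inr (i : Fin n) : holGrad c d (f * X (Sum.inr i)) = d i • holGrad c d f := by
  ext j
  simp [holGrad, evalPair, pderiv_X]

lemma antiholGrad_mul_X_inl (i : Fin n) :
    antiholGrad c d (f * X (Sum.inl i)) = c i • antiholGrad c d f := by
  ext j
  simp [antiholGrad, evalPair, pderiv_X]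

lemma antiholGrad_mul_X_inr (i : Fin n) :
    antiholGrad c d (f * X (Sum.inr i)) =
      d i • antiholGrad c d f + evalPair c d f • Pi.single i 1 := by
  ext j
  simp [antiholGrad, evalPair, pderiv_X, Pi.single_apply, apply_ite (eval _), @eq_comm _ i,
    add_comm]

lemma mixedHessian_mul_X_inl (i : Fin n) :
    mixedHessian c d (f * X (Sum.inl i)) =
      c i • mixedHessian c d f + vecMulVec (Pi.single i 1) (antiholGrad c d f) := by
  ext j k
  simp [mixedHessian, antiholGrad, evalPair, pderiv_X, Pi.single_apply, apply_ite (pderiv _),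
    apply_ite (eval _), @eq_comm _ i, add_comm, vecMulVec_apply]

lemma mixedHessian_mul_X_inr (i : Fin n) :
    mixedHessian c d (f * X (Sum.inr i)) =
      d i • mixedHessian c d f + vecMulVec (holGrad c d f) (Pi.single i 1) := by
  ext j k
  simp [mixedHessian, holGrad, evalPair, pderiv_X, Pi.single_apply, apply_ite (eval (Sum.elim c d)),
    @eq_comm _ i, add_comm, vecMulVec_apply]

lemma holGrad_add : holGrad c d (f + g) = holGrad c d f + holGrad c d g := by
  ext j
  simp [holGrad, evalPair]

lemma antiholGrad_add : antiholGrad c d (f + g) = antiholGrad c d f + antiholGrad c d g := by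
  ext j
  simp [antiholGrad, evalPair]

lemma mixedHessian_add : mixedHessian c d (f + g) = mixedHessian c d f + mixedHessian c d g := by
  ext j k
  simp [mixedHessian, evalPair]

lemma holGrad_C (r : ℂ) : holGrad c d (C r) = 0 := by
  ext j
  simp [holGrad, evalPair]

lemma antiholGrad_C (r : ℂ) : antiholGrad c d (C r) = 0 := by
  ext j
  simp [antiholGrad, evalPair]

lemma mixedHessian_C (r : ℂ) : mixedHessian c d (C r) = 0 := by
  ext j k
  simp [mixedHessian, evalPair]

end Derivatives

section TaylorExpansion

variable {n : ℕ} {κ : Type*} [Fintype κ]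

/-- The matrix with columns `(T_j - a_j) x`; it vanishes iff `x` lies in the joint eigenspace
of `T` for `a`. -/
def defectMatrix (T : Fin n → Matrix κ κ ℂ) (a : Fin n → ℂ) (x : κ → ℂ) :
    Matrix κ (Fin n) ℂ :=
  Matrix.of fun i j => (T j *ᵥ x - a j • x) i

/-- Generalized joint eigenvectors of order at most two: `x` is killed by all products
`(T_i - a_i) (T_j - a_j)`. -/
def IsJointEigenvectorOfOrderTwo (T : Fin n → Matrix κ κ ℂ) (a : Fin n → ℂ) (x : κ → ℂ) :
    Prop :=
  ∀ j, defectMatrix T a ((defectMatrix T a x).col j) = 0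

variable {T : Fin n → Matrix κ κ ℂ} {a b : Fin n → ℂ} {x y : κ → ℂ}

lemma col_defectMatrix (T : Fin n → Matrix κ κ ℂ) (a : Fin n → ℂ) (x : κ → ℂ) (j : Fin n) :
    (defectMatrix T a x).col j = T j *ᵥ x - a j • x :=
  rfl

lemma mulVec_eq_smul_add_col_defectMatrix (T : Fin n → Matrix κ κ ℂ) (a : Fin n → ℂ)
    (x : κ → ℂ) (j : Fin n) :
    T j *ᵥ x = a j • x + (defectMatrix T a x).col j := by
  rw [col_defectMatrix, add_sub_cancel]

lemma defectMatrix_eq_zero_iff : defectMatrix T a x = 0 ↔ ∀ j, T j *ᵥ x = a j • x := by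
  refine ⟨fun h j => sub_eq_zero.mp ?_, fun h => ext_col fun j => ?_⟩
  · rw [← col_defectMatrix, h]
    rfl
  · rw [col_defectMatrix, h, sub_self]
    rfl

lemma isJointEigenvectorOfOrderTwo_of_defectMatrix_eq_zero (h : defectMatrix T a x = 0) :
    IsJointEigenvectorOfOrderTwo T a x := fun j => by
  rw [h, defectMatrix_eq_zero_iff]
  intro k
  change T k *ᵥ 0 = a k • 0
  rw [mulVec_zero, smul_zero]

/-- The part of `y* ψ_T(f) x` contributed by the Taylor expansion of `f` at `(a, b̄)`, up to
order one in `z` and order one in `z̄`: the displacements `z_j - a_j` and `z̄_j - b̄_j` act as the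
columns of `defectMatrix T a x` and `defectMatrix T b y`. -/
def taylorForm (T : Fin n → Matrix κ κ ℂ) (a b : Fin n → ℂ) (x y : κ → ℂ) (f : CPoly n) : ℂ :=
  evalPair a (star b) f * (star y ⬝ᵥ x) + star y ⬝ᵥ defectMatrix T a x *ᵥ holGrad a (star b) f +
    (antiholGrad a (star b) f ᵥ* (defectMatrix T b y)ᴴ) ⬝ᵥ x +
    trace ((defectMatrix T b y)ᴴ * defectMatrix T a x * mixedHessian a (star b) f)

lemma taylorForm_add (f g : CPoly n) :
    taylorForm T a b x y (f + g) = taylorForm T a b x y f + taylorForm T a b x y g := by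
  simp only [taylorForm, evalPair, map_add, holGrad_add, antiholGrad_add, mixedHessian_add, add_mul,
    mulVec_add, add_vecMul, dotProduct_add, add_dotProduct, mul_add, trace_add]
  ring

lemma taylorForm_mul_X_inl (hx : IsJointEigenvectorOfOrderTwo T a x) (f : CPoly n) (i : Fin n) :
    taylorForm T a b x y (f * X (Sum.inl i)) =
      a i * taylorForm T a b x y f + taylorForm T a b ((defectMatrix T a x).col i) y f := by
  simp only [taylorForm, hx i, evalPair_mul_X_inl, holGrad_mul_X_inl, antiholGrad_mul_X_inl,
    mixedHessian_mul_X_inl, mulVec_add, mulVec_smul, mulVec_single_one, smul_vecMul,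
    dotProduct_add, dotProduct_smul, smul_dotProduct, mul_add, trace_add, Matrix.mul_smul,
    trace_smul, trace_mul_mul_vecMulVec, smul_eq_mul, Matrix.zero_mul, Matrix.mul_zero, trace_zero,
    zero_mulVec, dotProduct_zero]
  ring

lemma taylorForm_mul_X_inr (hy : IsJointEigenvectorOfOrderTwo T b y) (f : CPoly n) (i : Fin n) :
    taylorForm T a b x y (f * X (Sum.inr i)) =
      star b i * taylorForm T a b x y f + taylorForm T a b x ((defectMatrix T b y).col i) f := by
  simp only [taylorForm, hy i, evalPair_mul_X_inr, holGrad_mul_X_inr, antiholGrad_mul_X_inr,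
    mixedHessian_mul_X_inr, add_vecMul, mulVec_smul, single_one_vecMul_conjTranspose, smul_vecMul,
    add_dotProduct, dotProduct_smul, smul_dotProduct, mul_add, trace_add, Matrix.mul_smul,
    trace_smul, trace_mul_mul_vecMulVec, smul_eq_mul, conjTranspose_zero, Matrix.zero_mul,
    vecMul_zero, zero_dotProduct, trace_zero]
  ring

variable [DecidableEq κ]

lemma star_dotProduct_hereditaryCalculus_mul_X_inl (hT : ∀ i j, Commute (T i) (T j))
    (a : Fin n → ℂ) (x y : κ → ℂ) (f : CPoly n) (i : Fin n) :
    star y ⬝ᵥ hereditaryCalculus T (f * X (Sum.inl i)) *ᵥ x =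
      a i * (star y ⬝ᵥ hereditaryCalculus T f *ᵥ x) +
        star y ⬝ᵥ hereditaryCalculus T f *ᵥ (defectMatrix T a x).col i := by
  rw [hereditaryCalculus_mul_X_inl hT, ← mulVec_mulVec, mulVec_eq_smul_add_col_defectMatrix T a,
    mulVec_add, mulVec_smul, dotProduct_add, dotProduct_smul, smul_eq_mul]

lemma star_dotProduct_hereditaryCalculus_mul_X_inr (hT : ∀ i j, Commute (T i) (T j))
    (b : Fin n → ℂ) (x y : κ → ℂ) (f : CPoly n) (i : Fin n) :
    star y ⬝ᵥ hereditaryCalculus T (f * X (Sum.inr i)) *ᵥ x =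
      star b i * (star y ⬝ᵥ hereditaryCalculus T f *ᵥ x) +
        star ((defectMatrix T b y).col i) ⬝ᵥ hereditaryCalculus T f *ᵥ x := by
  rw [hereditaryCalculus_mul_X_inr hT, ← mulVec_mulVec, dotProduct_mulVec, ← star_mulVec,
    mulVec_eq_smul_add_col_defectMatrix T b, star_add, star_smul, add_dotProduct,
    smul_dotProduct, smul_eq_mul, Pi.star_apply]

lemma star_dotProduct_hereditaryCalculus_mulVec (hT : ∀ i j, Commute (T i) (T j))
    (hx : IsJointEigenvectorOfOrderTwo T a x) (hy : IsJointEigenvectorOfOrderTwo T b y)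
    (f : CPoly n) : star y ⬝ᵥ hereditaryCalculus T f *ᵥ x = taylorForm T a b x y f := by
  induction f using MvPolynomial.induction_on generalizing x y with
  | C r =>
    simp [taylorForm, hereditaryCalculus_C, holGrad_C, antiholGrad_C, mixedHessian_C, evalPair,
      smul_mulVec]
  | add f g hf hg =>
    rw [map_add, add_mulVec, dotProduct_add, hf hx hy, hg hx hy, taylorForm_add]
  | mul_X f i hf =>
    obtain i | i := i
    · rw [star_dotProduct_hereditaryCalculus_mul_X_inl hT a, taylorForm_mul_X_inl hx, hf hx hy,
        hf (isJointEigenvectorOfOrderTwo_of_defectMatrix_eq_zero (hx i)) hy]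
    · rw [star_dotProduct_hereditaryCalculus_mul_X_inr hT b, taylorForm_mul_X_inr hy, hf hx hy,
        hf hx (isJointEigenvectorOfOrderTwo_of_defectMatrix_eq_zero (hy i))]

lemma taylorForm_eq_zero_of_mem_ker (hT : ∀ i j, Commute (T i) (T j))
    (hx : IsJointEigenvectorOfOrderTwo T a x) (hy : IsJointEigenvectorOfOrderTwo T b y)
    {f : CPoly n} (hf : f ∈ LinearMap.ker (hereditaryCalculus T)) :
    taylorForm T a b x y f = 0 := by
  rw [← star_dotProduct_hereditaryCalculus_mulVec hT hx hy, LinearMap.mem_ker.mp hf, zero_mulVec,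
    dotProduct_zero]

end TaylorExpansion

section KernelInclusions

variable {n : ℕ} {κ : Type*} [Fintype κ] [DecidableEq κ]
  {T : Fin n → Matrix κ κ ℂ} {a b : Fin n → ℂ} {x y : κ → ℂ} {f : CPoly n}

lemma evalPair_eq_zero_of_mem_ker (hT : ∀ i j, Commute (T i) (T j))
    (hx : defectMatrix T a x = 0) (hy : defectMatrix T b y = 0) (hxy : star y ⬝ᵥ x ≠ 0)
    (hf : f ∈ LinearMap.ker (hereditaryCalculus T)) : evalPair a (star b) f = 0 := by
  have h := taylorForm_eq_zero_of_mem_ker hT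
    (isJointEigenvectorOfOrderTwo_of_defectMatrix_eq_zero hx)
    (isJointEigenvectorOfOrderTwo_of_defectMatrix_eq_zero hy) hf
  simpa [taylorForm, hx, hy, hxy] using h

lemma ker_subset_Iab_of_dotProduct_ne_zero (hT : ∀ i j, Commute (T i) (T j))
    (hx : defectMatrix T a x = 0) (hy : defectMatrix T b y = 0) (hxy : star x ⬝ᵥ y ≠ 0) :
    (LinearMap.ker (hereditaryCalculus T) : Set (CPoly n)) ⊆ Iab a b := fun f hf => by
  have hyx : star y ⬝ᵥ x ≠ 0 := by rwa [star_dotProduct, star_ne_zero]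
  have hxx : star x ⬝ᵥ x ≠ 0 := fun h => hyx (by
    rw [dotProduct_star_self_eq_zero.mp h, dotProduct_zero])
  have hyy : star y ⬝ᵥ y ≠ 0 := fun h => hxy (by
    rw [dotProduct_star_self_eq_zero.mp h, dotProduct_zero])
  exact ⟨evalPair_eq_zero_of_mem_ker hT hx hx hxx hf, evalPair_eq_zero_of_mem_ker hT hx hy hyx hf,
    evalPair_eq_zero_of_mem_ker hT hy hx hxy hf, evalPair_eq_zero_of_mem_ker hT hy hy hyy hf⟩

lemma evalPair_eq_zero_of_defectMatrix_ne_zero (hT : ∀ i j, Commute (T i) (T j))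
    (hx : IsJointEigenvectorOfOrderTwo T a x) (hx' : defectMatrix T a x ≠ 0)
    (hf : f ∈ LinearMap.ker (hereditaryCalculus T)) : evalPair a (star a) f = 0 := by
  obtain ⟨k, hk⟩ := exists_col_ne_zero hx'
  exact evalPair_eq_zero_of_mem_ker hT (hx k) (hx k) (dotProduct_star_self_eq_zero.not.mpr hk) hf

lemma defectMatrix_mulVec_holGrad_eq_zero (hT : ∀ i j, Commute (T i) (T j))
    (hx : IsJointEigenvectorOfOrderTwo T a x)
    (hf : f ∈ LinearMap.ker (hereditaryCalculus T)) (hfa : evalPair a (star a) f = 0) :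
    defectMatrix T a x *ᵥ holGrad a (star a) f = 0 := by
  refine (conjTranspose_mul_self_mulVec_eq_zero _ _).mp ?_
  rw [← mulVec_mulVec]
  ext k
  change star ((defectMatrix T a x).col k) ⬝ᵥ _ = 0
  have h := taylorForm_eq_zero_of_mem_ker hT hx
    (isJointEigenvectorOfOrderTwo_of_defectMatrix_eq_zero (hx k)) hf
  simpa only [taylorForm, hx k, hfa, conjTranspose_zero, vecMul_zero, zero_dotProduct, zero_mul,
    Matrix.zero_mul, trace_zero, zero_add, add_zero] using h

lemma antiholGrad_vecMul_conjTranspose_defectMatrix_eq_zero (hT : ∀ i j, Commute (T i) (T j))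
    (hx : IsJointEigenvectorOfOrderTwo T a x)
    (hf : f ∈ LinearMap.ker (hereditaryCalculus T)) (hfa : evalPair a (star a) f = 0) :
    antiholGrad a (star a) f ᵥ* (defectMatrix T a x)ᴴ = 0 := by
  refine (vecMul_conjTranspose_mul_self_eq_zero _ _).mp ?_
  rw [← vecMul_vecMul]
  ext k
  change _ ⬝ᵥ (defectMatrix T a x).col k = 0
  have h := taylorForm_eq_zero_of_mem_ker hT
    (isJointEigenvectorOfOrderTwo_of_defectMatrix_eq_zero (hx k)) hx hf
  simpa only [taylorForm, hx k, hfa, zero_mulVec, dotProduct_zero, zero_mul, Matrix.mul_zero,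
    Matrix.zero_mul, trace_zero, zero_add, add_zero] using h

lemma trace_mul_mixedHessian_eq_zero (hT : ∀ i j, Commute (T i) (T j))
    (hx : IsJointEigenvectorOfOrderTwo T a x)
    (hf : f ∈ LinearMap.ker (hereditaryCalculus T)) (hfa : evalPair a (star a) f = 0) :
    trace ((defectMatrix T a x)ᴴ * defectMatrix T a x * mixedHessian a (star a) f) = 0 := by
  have h := taylorForm_eq_zero_of_mem_ker hT hx hx hf
  simpa [taylorForm, hfa, defectMatrix_mulVec_holGrad_eq_zero hT hx hf hfa,
    antiholGrad_vecMul_conjTranspose_defectMatrix_eq_zero hT hx hf hfa] using h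

lemma ker_subset_Jau_of_defectMatrix_ne_zero (hT : ∀ i j, Commute (T i) (T j))
    (hx : IsJointEigenvectorOfOrderTwo T a x) (hx' : defectMatrix T a x ≠ 0) :
    (LinearMap.ker (hereditaryCalculus T) : Set (CPoly n)) ⊆
      Jau a ((defectMatrix T a x)ᴴ * defectMatrix T a x) := fun f hf => by
  have hfa := evalPair_eq_zero_of_defectMatrix_ne_zero hT hx hx' hf
  refine ⟨hfa, ?_, ?_, trace_mul_mixedHessian_eq_zero hT hx hf hfa⟩
  · change _ *ᵥ holGrad a (star a) f = 0
    rw [← mulVec_mulVec, defectMatrix_mulVec_holGrad_eq_zero hT hx hf hfa, mulVec_zero]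
  · change ((defectMatrix T a x)ᴴ * defectMatrix T a x)ᴴᵀ *ᵥ antiholGrad a (star a) f = 0
    rw [(isHermitian_conjTranspose_mul_self _).eq, mulVec_transpose, ← vecMul_vecMul,
      antiholGrad_vecMul_conjTranspose_defectMatrix_eq_zero hT hx hf hfa, zero_vecMul]

end KernelInclusions

section Normality

variable {n : ℕ} {κ : Type*} [Fintype κ] [DecidableEq κ] {T : Fin n → Matrix κ κ ℂ}

/-- The joint eigenspace of `T` for the eigenvalue tuple `a`. -/
def jointEigenspace (T : Fin n → Matrix κ κ ℂ) (a : Fin n → ℂ) : Submodule ℂ (κ → ℂ) :=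
  ⨅ j, Module.End.eigenspace (toLin' (T j)) (a j)

lemma mem_jointEigenspace_iff {a : Fin n → ℂ} {x : κ → ℂ} :
    x ∈ jointEigenspace T a ↔ defectMatrix T a x = 0 := by
  simp [jointEigenspace, defectMatrix_eq_zero_iff]

lemma iSup_jointEigenspace_eq_top (hT : ∀ i j, Commute (T i) (T j))
    (h : ∀ a x, IsJointEigenvectorOfOrderTwo T a x → defectMatrix T a x = 0) :
    ⨆ a, jointEigenspace T a = ⊤ := by
  refine iSup_iInf_eigenspace_eq_top_of_commute (f := fun j => toLin' (T j))
    (fun i j => (hT i j).map toLinAlgEquiv')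
    (fun i => Module.End.iSup_maxGenEigenspace_eq_top _) fun a x hx => ?_
  have hdefect : ∀ y j, (toLin' (T j) - a j • 1) y = (defectMatrix T a y).col j := fun y j => rfl
  simp only [hdefect] at hx ⊢
  have hx0 := h a x fun j => ext_col fun i => hx i j
  exact fun j => by rw [hx0]; rfl

lemma commute_conjTranspose_of_orthogonal_jointEigenspaces
    (htop : ⨆ a, jointEigenspace T a = ⊤)
    (horth : ∀ a b, a ≠ b → ∀ x ∈ jointEigenspace T a, ∀ y ∈ jointEigenspace T b, star x ⬝ᵥ y = 0)
    (j : Fin n) : Commute (T j) (T j)ᴴ :=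
  commute_conjTranspose_of_orthogonal_eigenspaces (μ := fun a : Fin n → ℂ => a j) htop
    (fun _ _ hx => defectMatrix_eq_zero_iff.mp (mem_jointEigenspace_iff.mp hx) j)
    fun a b hab => horth a b fun h => hab (congrFun h j)

end Normality

/-- Corollary: a commuting tuple `T` of matrices is normal iff `ker ψ_T` is contained
in no `I(a,b)` (`a ≠ b`) and in no `J(a,U)` (`U ≠ 0` psd hermitian). -/
theorem statement5 (n : ℕ) (hn : 0 < n) (m : ℕ) (T : Fin n → Matrix (Fin m) (Fin m) ℂ)
    (hT : ∀ i j, Commute (T i) (T j)) :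
    (∀ j, Commute (T j) ((T j)ᴴ)) ↔
    ((∀ a b : Fin n → ℂ, a ≠ b → ¬({f : CPoly n | psiMat T f = 0} ⊆ Iab a b)) ∧
      ∀ (a : Fin n → ℂ) (U : Matrix (Fin n) (Fin n) ℂ), U.PosSemidef → U ≠ 0 →
        ¬({f : CPoly n | psiMat T f = 0} ⊆ Jau a U)) := by
  rw [← coe_ker_hereditaryCalculus]
  constructor
  · intro hnormal
    choose p hp using fun j => exists_X_inr_sub_aeval_mem_ker hT (hnormal j)
    exact ⟨fun a b hab hI => hab (funext fun j => eq_of_X_inr_sub_aeval_mem_Iab (hI (hp j))),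
      fun a U _ hU hJ => hU (ext fun i j => apply_eq_zero_of_X_inr_sub_aeval_mem_Jau (hJ (hp j)) i)⟩
  · rintro ⟨hI, hJ⟩
    have hsemisimple : ∀ a x, IsJointEigenvectorOfOrderTwo T a x → defectMatrix T a x = 0 := by
      intro a x hx
      by_contra hx0
      exact hJ a _ (posSemidef_conjTranspose_mul_self _)
        (conjTranspose_mul_self_eq_zero.not.mpr hx0)
        (ker_subset_Jau_of_defectMatrix_ne_zero hT hx hx0)
    have horth : ∀ a b, a ≠ b → ∀ x ∈ jointEigenspace T a, ∀ y ∈ jointEigenspace T b,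
        star x ⬝ᵥ y = 0 := by
      intro a b hab x hx y hy
      by_contra hxy
      exact hI a b hab (ker_subset_Iab_of_dotProduct_ne_zero hT (mem_jointEigenspace_iff.mp hx)
        (mem_jointEigenspace_iff.mp hy) hxy)
    exact commute_conjTranspose_of_orthogonal_jointEigenspaces
      (iSup_jointEigenspace_eq_top hT hsemisimple) horth

end
end

section
/- Let n = 1, let m ≥ 2 be an integer and let a_0, …, a_{m−1} ≥ 0 be real numbers. Set f = |z|^{2m} − Σ_{j=0}^{m−1} a_j |z|^{2j} ∈ ℝ[x,y]. Then the semiring Σ_h + (f) is not archimedean; in particular, there exist no c ∈ ℝ and g ∈ ℂ[z,z̄] with g = g* such that c − |z|² + f·g ∈ Σ_h. -/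
open MvPolynomial Complex Matrix MeasureTheory ComplexOrder

noncomputable section

universe u

/-!
Taking the coefficients of `z^k z̄^k` defines a `ℂ[|z|²]`-linear map `ℂ[z,z̄] → ℂ[t]` that sends
`|z|²` to `t` and `Σ_h` to polynomials with nonnegative coefficients. With `q = t^m - ∑ a_j t^j`
the image of `f`, an element `h(|z|²) + f g` of `Σ_h` with `deg h < m` thus yields `s = h + q p`
with `s` nonnegative. Comparing coefficients from the top down, the quotient `p` is nonnegative,
since `p_k = s_{k+m} + (a p)_{k+m}` and the right-hand side involves only `p_i` with `i > k`.
Below degree `m` the coefficients of `q p` are those of `-a p`, hence the remainder `h` is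
nonnegative too. As `m ≥ 2`, this excludes `h = c - t`.
-/

open scoped Polynomial

lemma coeff_sum_range_C_mul_X_pow {R : Type*} [Semiring R] (a : ℕ → R) (m k : ℕ) :
    (∑ j ∈ Finset.range m, Polynomial.C (a j) * Polynomial.X ^ j).coeff k =
      if k < m then a k else 0 := by
  simp [Polynomial.coeff_X_pow]

lemma degree_sum_range_C_mul_X_pow_lt {R : Type*} [Semiring R] (a : ℕ → R) (m : ℕ) :
    (∑ j ∈ Finset.range m, Polynomial.C (a j) * Polynomial.X ^ j).degree < (m : WithBot ℕ) :=
  (Polynomial.degree_lt_iff_coeff_zero _ _).mpr fun j hj => by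
    rw [coeff_sum_range_C_mul_X_pow, if_neg hj.not_gt]

lemma coeff_mul_nonneg_of_forall_add_eq {R : Type*} [Semiring R] [PartialOrder R]
    [IsOrderedAddMonoid R] {p q : R[X]} {n : ℕ}
    (h : ∀ i j, i + j = n → 0 ≤ p.coeff i * q.coeff j) :
    0 ≤ (p * q).coeff n := by
  rw [Polynomial.coeff_mul]
  exact Finset.sum_nonneg fun ij hij => h ij.1 ij.2 (Finset.HasAntidiagonal.mem_antidiagonal.mp hij)

section PolynomialDivision

variable {R : Type*} [Ring R] [PartialOrder R] [IsOrderedRing R]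

lemma coeff_nonneg_of_coeff_X_pow_sub_mul_nonneg {m : ℕ} {a p : R[X]} (ham : a.degree < m)
    (ha : ∀ j, 0 ≤ a.coeff j)
    (hqp : ∀ k, 0 ≤ ((Polynomial.X ^ m - a) * p).coeff (k + m)) (k : ℕ) : 0 ≤ p.coeff k := by
  induction hd : p.natDegree + 1 - k using Nat.strong_induction_on generalizing k with
  | _ d ih =>
    subst hd
    obtain hk | hk := lt_or_ge p.natDegree k
    · exact (Polynomial.coeff_eq_zero_of_natDegree_lt hk).ge
    have hap : 0 ≤ (a * p).coeff (k + m) := by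
      refine coeff_mul_nonneg_of_forall_add_eq fun i j hij => ?_
      obtain him | him := lt_or_ge i m
      · exact mul_nonneg (ha i) (ih _ (by lia) j rfl)
      · simp [Polynomial.coeff_eq_zero_of_degree_lt (ham.trans_le (Nat.cast_le.mpr him))]
    have hpk : p.coeff k = ((Polynomial.X ^ m - a) * p).coeff (k + m) + (a * p).coeff (k + m) := by
      rw [sub_mul, Polynomial.coeff_sub, Polynomial.coeff_X_pow_mul, sub_add_cancel]
    exact hpk ▸ add_nonneg (hqp k) hap

lemma coeff_nonneg_of_coeff_add_X_pow_sub_mul_nonneg {m : ℕ} {a h p : R[X]} (ham : a.degree < m)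
    (ha : ∀ j, 0 ≤ a.coeff j) (hhm : h.degree < m)
    (hs : ∀ k, 0 ≤ (h + (Polynomial.X ^ m - a) * p).coeff k) (k : ℕ) : 0 ≤ h.coeff k := by
  have h_top {k : ℕ} (hk : m ≤ k) : h.coeff k = 0 :=
    Polynomial.coeff_eq_zero_of_degree_lt (hhm.trans_le (Nat.cast_le.mpr hk))
  obtain hk | hk := lt_or_ge k m
  · have hp : ∀ j, 0 ≤ p.coeff j := coeff_nonneg_of_coeff_X_pow_sub_mul_nonneg ham ha fun k => by
      simpa [h_top (Nat.le_add_left m k)] using hs (k + m)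
    have hap : 0 ≤ (a * p).coeff k :=
      coeff_mul_nonneg_of_forall_add_eq fun i j _ => mul_nonneg (ha i) (hp j)
    have hhk : h.coeff k = (h + (Polynomial.X ^ m - a) * p).coeff k + (a * p).coeff k := by
      simp [sub_mul, Polynomial.coeff_X_pow_mul', hk.not_ge]
    exact hhk ▸ add_nonneg (hs k) hap
  · exact (h_top hk).ge

end PolynomialDivision

lemma coeff_sumElim_rename_inl_mul_rename_inr {σ τ R : Type*} [CommSemiring R] (u : σ →₀ ℕ)
    (v : τ →₀ ℕ) (p : MvPolynomial σ R) (q : MvPolynomial τ R) :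
    coeff (u.sumElim v) (rename Sum.inl p * rename Sum.inr q) = coeff u p * coeff v q := by
  classical
  induction p using MvPolynomial.induction_on' with
  | add p₁ p₂ h₁ h₂ => simp only [map_add, add_mul, coeff_add, h₁, h₂]
  | monomial s x =>
    induction q using MvPolynomial.induction_on' with
    | add q₁ q₂ h₁ h₂ => simp only [map_add, mul_add, coeff_add, h₁, h₂]
    | monomial t y =>
      have sumElim_inj : s.sumElim t = u.sumElim v ↔ s = u ∧ t = v := by
        simp [DFunLike.ext_iff]
      simp only [rename_monomial, monomial_mul, ← Finsupp.sumElim_eq_add, coeff_monomial,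
        sumElim_inj, ite_and, ite_mul, mul_ite, zero_mul, mul_zero]
      split_ifs <;> rfl

lemma hermStar_hol {n : ℕ} (p : MvPolynomial (Fin n) ℂ) :
    hermStar n (hol n p) = rename Sum.inr (map (starRingEnd ℂ) p) := by
  simp [hermStar, hol, map_rename, rename_rename, Function.comp_def]

lemma hermStar_normZ (n : ℕ) : hermStar n (normZ n) = normZ n := by
  simp [hermStar, normZ, mul_comm]

lemma coeff_sumElim_self_nonneg_of_mem_SigmaH {n : ℕ} {s : CPoly n} (hs : s ∈ SigmaH n)
    (u : Fin n →₀ ℕ) : 0 ≤ coeff (u.sumElim u) s := by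
  obtain ⟨N, p, rfl⟩ := hs
  rw [coeff_sum]
  refine Finset.sum_nonneg fun i _ => ?_
  rw [hermStar_hol, hol, coeff_sumElim_rename_inl_mul_rename_inr, coeff_map]
  exact mul_star_self_nonneg _

/-- The exponent of the monomial `z^k z̄^k`. -/
def diagExponent (k : ℕ) : Fin 1 ⊕ Fin 1 →₀ ℕ :=
  (Finsupp.single 0 k).sumElim (Finsupp.single 0 k)

lemma diagExponent_apply (k : ℕ) (i : Fin 1 ⊕ Fin 1) : diagExponent k i = k := by
  rcases i with i | i <;> simp [diagExponent, Subsingleton.elim i 0]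

lemma diagExponent_injective : Function.Injective diagExponent := fun j k h => by
  simpa only [diagExponent_apply] using DFunLike.congr_fun h (Sum.inl 0)

/-- The diagonal part `∑ g_{kk} t^k` of `g = ∑ g_{jk} z^j z̄^k`, a polynomial in `t = |z|²` that has
nonnegative coefficients when `g ∈ Σ_h`. -/
def diagonalPart : CPoly 1 →ₗ[ℂ] ℂ[X] where
  toFun g := ⟨AddMonoidAlgebra.comapDomain diagExponent diagExponent_injective g⟩
  map_add' g₁ g₂ := by ext; simp
  map_smul' r g := by ext; simp

lemma coeff_diagonalPart (g : CPoly 1) (k : ℕ) :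
    (diagonalPart g).coeff k = coeff (diagExponent k) g :=
  rfl

lemma diagonalPart_one : diagonalPart 1 = 1 := by
  ext k
  have : diagExponent 0 = 0 := by simp [diagExponent]
  rw [coeff_diagonalPart, coeff_one, Polynomial.coeff_one, ← this]
  simp only [diagExponent_injective.eq_iff, eq_comm]

lemma normZ_one_eq : normZ 1 = X (Sum.inl 0) * X (Sum.inr 0) := by simp [normZ]

lemma normZ_one_eq_monomial : normZ 1 = monomial (diagExponent 1) 1 := by
  simp [normZ_one_eq, diagExponent, X, monomial_mul]

lemma diagonalPart_normZ_mul (g : CPoly 1) :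
    diagonalPart (normZ 1 * g) = Polynomial.X * diagonalPart g := by
  ext k
  rw [coeff_diagonalPart, normZ_one_eq_monomial]
  cases k with
  | zero =>
    have : ¬ diagExponent 1 ≤ diagExponent 0 := fun h => by
      simpa [diagExponent_apply] using h (Sum.inl 0)
    simp [coeff_monomial_mul', this]
  | succ k =>
    have : diagExponent (k + 1) = diagExponent 1 + diagExponent k := by
      ext i
      simp [diagExponent_apply, add_comm]
    rw [this, coeff_monomial_mul, one_mul, Polynomial.coeff_X_mul, coeff_diagonalPart]

lemma diagonalPart_aeval_normZ_mul (q : ℂ[X]) (g : CPoly 1) :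
    diagonalPart (Polynomial.aeval (normZ 1) q * g) = q * diagonalPart g := by
  induction q using Polynomial.induction_on generalizing g with
  | C r => rw [Polynomial.aeval_C, ← Algebra.smul_def, map_smul, Polynomial.smul_eq_C_mul]
  | add q₁ q₂ h₁ h₂ => rw [map_add, add_mul, add_mul, map_add, h₁, h₂]
  | monomial k r ih =>
    rw [pow_succ, ← mul_assoc, map_mul (Polynomial.aeval _), Polynomial.aeval_X, mul_assoc, ih,
      diagonalPart_normZ_mul, mul_assoc _ Polynomial.X]

lemma diagonalPart_aeval_normZ (q : ℂ[X]) :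
    diagonalPart (Polynomial.aeval (normZ 1) q) = q := by
  simpa [diagonalPart_one] using diagonalPart_aeval_normZ_mul q 1

lemma coeff_diagonalPart_nonneg_of_mem_SigmaH {s : CPoly 1} (hs : s ∈ SigmaH 1) (k : ℕ) :
    0 ≤ (diagonalPart s).coeff k :=
  coeff_diagonalPart s k ▸ coeff_sumElim_self_nonneg_of_mem_SigmaH hs _

lemma coeff_nonneg_of_aeval_normZ_add_mul_mem_SigmaH {m : ℕ} {a h : ℂ[X]} (ham : a.degree < m)
    (ha : ∀ j, 0 ≤ a.coeff j) (hhm : h.degree < m) {g : CPoly 1}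
    (hs : Polynomial.aeval (normZ 1) h + Polynomial.aeval (normZ 1) (Polynomial.X ^ m - a) * g ∈
      SigmaH 1) (k : ℕ) : 0 ≤ h.coeff k := by
  refine coeff_nonneg_of_coeff_add_X_pow_sub_mul_nonneg (p := diagonalPart g) ham ha hhm
    (fun k => ?_) k
  simpa only [map_add, diagonalPart_aeval_normZ, diagonalPart_aeval_normZ_mul] using
    coeff_diagonalPart_nonneg_of_mem_SigmaH hs k

lemma C_sub_normZ_add_aeval_normZ_mul_notMem_SigmaH {m : ℕ} (hm : 2 ≤ m) {a : ℂ[X]}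
    (ham : a.degree < m) (ha : ∀ j, 0 ≤ a.coeff j) (c : ℂ) (g : CPoly 1) :
    C c - normZ 1 + Polynomial.aeval (normZ 1) (Polynomial.X ^ m - a) * g ∉ SigmaH 1 := by
  intro hs
  have h_deg : (Polynomial.C c - Polynomial.X).degree < (m : WithBot ℕ) :=
    lt_of_le_of_lt (b := 1) (by compute_degree) (by exact_mod_cast hm)
  have h_aeval : C c - normZ 1 = Polynomial.aeval (normZ 1) (Polynomial.C c - Polynomial.X) := by
    simp [algebraMap_eq]
  have h_coeff : (0 : ℂ) ≤ (Polynomial.C c - Polynomial.X).coeff 1 :=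
    coeff_nonneg_of_aeval_normZ_add_mul_mem_SigmaH ham ha h_deg (h_aeval ▸ hs) 1
  norm_num [Polynomial.coeff_C] at h_coeff

lemma exists_C_sub_add_mul_mem_SigmaH_of_isArchSet {n : ℕ} {f : CPoly n}
    (harch : IsArchSet n (SigmaHPlus n {x | ∃ h, hermStar n h = h ∧ x = f * h}))
    {p : CPoly n} (hp : hermStar n p = p) :
    ∃ (c : ℝ) (g : CPoly n), hermStar n g = g ∧ C (c : ℂ) - p + f * g ∈ SigmaH n := by
  obtain ⟨c, -, s, hs, _, ⟨g, hg, rfl⟩, hsum⟩ := harch p hp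
  exact ⟨c, -g, by rw [map_neg, hg], by rwa [hsum, mul_neg, add_neg_cancel_right]⟩

/-- Example `exnotarch`: for `f = |z|^{2m} - ∑_{j<m} a_j |z|^{2j}` with `m ≥ 2` and
`a_j ≥ 0`, the semiring `Σ_h + (f)` is not archimedean; in particular there are no
`c ∈ ℝ` and real `g` with `c - |z|² + f·g ∈ Σ_h`. -/
theorem statement8 (m : ℕ) (hm : 2 ≤ m) (a : ℕ → ℝ) (ha : ∀ j, 0 ≤ a j) (f : CPoly 1)
    (hf : f = (X (Sum.inl 0) * X (Sum.inr 0)) ^ m -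
      ∑ j ∈ Finset.range m, C ((a j : ℝ) : ℂ) * (X (Sum.inl 0) * X (Sum.inr 0)) ^ j) :
    (¬ IsArchSet 1 (SigmaHPlus 1 {x : CPoly 1 | ∃ h, hermStar 1 h = h ∧ x = f * h})) ∧
    ¬ ∃ (c : ℝ) (g : CPoly 1), hermStar 1 g = g ∧
      (C (c : ℂ) - X (Sum.inl 0) * X (Sum.inr 0) + f * g) ∈ SigmaH 1 := by
  set b : ℂ[X] := ∑ j ∈ Finset.range m, Polynomial.C (a j : ℂ) * Polynomial.X ^ j with hb
  have hb_nonneg (j : ℕ) : 0 ≤ b.coeff j := by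
    rw [hb, coeff_sum_range_C_mul_X_pow (fun j => (a j : ℂ))]
    split_ifs <;> simp [ha]
  have hf_aeval : f = Polynomial.aeval (normZ 1) (Polynomial.X ^ m - b) := by
    simp [hf, hb, normZ_one_eq, algebraMap_eq]
  have h_notMem : ¬ ∃ (c : ℝ) (g : CPoly 1), hermStar 1 g = g ∧
      C (c : ℂ) - normZ 1 + f * g ∈ SigmaH 1 := fun ⟨c, g, _, hs⟩ =>
    C_sub_normZ_add_aeval_normZ_mul_notMem_SigmaH hm (degree_sum_range_C_mul_X_pow_lt _ m)
      hb_nonneg c g (hf_aeval ▸ hs)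
  rw [← normZ_one_eq]
  exact ⟨fun harch => h_notMem
    (exists_C_sub_add_mul_mem_SigmaH_of_isArchSet harch (hermStar_normZ 1)), h_notMem⟩

end
end

section
/- Let n ≥ 1 and let 0 ≠ f ∈ Σ_h (so f = f*). Then the leading form lf(f), i.e., the nonvanishing homogeneous part of f of highest total degree, again belongs to Σ_h. In particular, when n = 1, the total degree of f is an even number 2m and lf(f) = a·(zz̄)^m for some real number a > 0. -/
open MvPolynomial Complex Matrix MeasureTheory ComplexOrder

noncomputable section

universe u

/-!
If `f = ∑ |p_i|²` with holomorphic `p_i` of maximal degree `d`, the degree `2d` part of `f` is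
`∑ |q_i|²`, where `q_i` is the degree `d` part of `p_i`. The leading parts cannot cancel: at a point
`a`, the sum `∑ |q_i|²` takes the value `∑ |q_i(a)|²`, so it vanishes only if every `q_i` does.
Hence `2d` is the degree of `f` and `∑ |q_i|²` its leading form. In one variable `q_i = c_i z^d`,
and the leading form is `(∑ |c_i|²) (z z̄)^d`.
-/

section GradedParts

variable {σ ι R : Type*} [CommSemiring R]

theorem homogeneousComponent_add_mul {p q : MvPolynomial σ R} {a b : ℕ}
    (hp : p.totalDegree ≤ a) (hq : q.totalDegree ≤ b) :
    homogeneousComponent (a + b) (p * q) =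
      homogeneousComponent a p * homogeneousComponent b q := by
  classical
  ext m
  have hterm : ∀ x ∈ Finset.HasAntidiagonal.antidiagonal m,
      coeff x.1 (homogeneousComponent a p) * coeff x.2 (homogeneousComponent b q) =
        if m.degree = a + b then coeff x.1 p * coeff x.2 q else 0 := by
    intro x hx
    have hdeg : x.1.degree + x.2.degree = m.degree := by
      rw [← map_add, Finset.HasAntidiagonal.mem_antidiagonal.1 hx]
    rw [coeff_homogeneousComponent, coeff_homogeneousComponent]
    rcases lt_or_ge a x.1.degree with hx₁ | hx₁
    · have hcoeff : coeff x.1 p = 0 := coeff_eq_zero_of_totalDegree_lt (hp.trans_lt hx₁)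
      simp [hcoeff]
    rcases lt_or_ge b x.2.degree with hx₂ | hx₂
    · have hcoeff : coeff x.2 q = 0 := coeff_eq_zero_of_totalDegree_lt (hq.trans_lt hx₂)
      simp [hcoeff]
    · have hiff : m.degree = a + b ↔ x.1.degree = a ∧ x.2.degree = b := by omega
      rw [ite_zero_mul_ite_zero]
      exact if_congr hiff.symm rfl rfl
  rw [coeff_homogeneousComponent, coeff_mul, coeff_mul, Finset.sum_congr rfl hterm,
    Finset.sum_ite_irrel, Finset.sum_const_zero]

theorem homogeneousComponent_map {S : Type*} [CommSemiring S] (φ : R →+* S) (d : ℕ)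
    (p : MvPolynomial σ R) :
    homogeneousComponent d (map φ p) = map φ (homogeneousComponent d p) := by
  ext m
  simp only [coeff_homogeneousComponent, coeff_map, apply_ite φ, map_zero]

theorem homogeneousComponent_totalDegree_ne_zero {p : MvPolynomial σ R} (hp : p ≠ 0) :
    homogeneousComponent p.totalDegree p ≠ 0 := by
  obtain ⟨m, hm, hdeg⟩ := Finset.exists_mem_eq_sup p.support (support_nonempty.2 hp)
    fun m => m.sum fun _ e => e
  have hcoeff : coeff m (homogeneousComponent p.totalDegree p) = coeff m p := by
    rw [coeff_homogeneousComponent]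
    exact if_pos hdeg.symm
  exact ne_zero_iff.2 ⟨m, hcoeff.trans_ne (mem_support_iff.1 hm)⟩

theorem exists_ne_zero_forall_totalDegree_le {s : Finset ι} {p : ι → MvPolynomial σ R}
    (h : ∃ i ∈ s, p i ≠ 0) :
    ∃ i ∈ s, p i ≠ 0 ∧ ∀ j ∈ s, (p j).totalDegree ≤ (p i).totalDegree := by
  classical
  obtain ⟨i₀, hi₀, hpi₀⟩ := h
  obtain ⟨i, hi, hmax⟩ := Finset.exists_max_image (s.filter fun i => p i ≠ 0)
    (fun i => (p i).totalDegree) ⟨i₀, Finset.mem_filter.2 ⟨hi₀, hpi₀⟩⟩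
  obtain ⟨his, hpi⟩ := Finset.mem_filter.1 hi
  refine ⟨i, his, hpi, fun j hj => ?_⟩
  by_cases hpj : p j = 0
  · simp [hpj]
  · exact hmax j (Finset.mem_filter.2 ⟨hj, hpj⟩)

theorem eq_C_mul_X_pow_of_isHomogeneous [Unique σ] {p : MvPolynomial σ R} {d : ℕ}
    (hp : p.IsHomogeneous d) : p = C (coeff (Finsupp.single default d) p) * X default ^ d := by
  classical
  rw [X_pow_eq_monomial, C_mul_monomial, mul_one]
  ext m
  rw [coeff_monomial]
  split_ifs with hm
  · rw [hm]
  · refine hp.coeff_eq_zero fun hdeg => hm (Finsupp.unique_ext ?_)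
    rw [Finsupp.single_eq_same, ← hdeg, Finsupp.degree_eq_sum, Fintype.sum_unique]

end GradedParts

section AbsSq

variable {n : ℕ} {ι : Type*}

/-- The polynomial `|f|² = f f*`, defined for every `f ∈ ℂ[z,z̄]`; the squares that generate `Σ_h`
are those of holomorphic polynomials. -/
def absSq (f : CPoly n) : CPoly n := f * hermStar n f

theorem homogeneousComponent_hermStar (d : ℕ) (f : CPoly n) :
    homogeneousComponent d (hermStar n f) = hermStar n (homogeneousComponent d f) :=
  (rename_homogeneousComponent d _).symm.trans
    (congrArg (rename Sum.swap) (homogeneousComponent_map _ d f))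

theorem totalDegree_hermStar_le (f : CPoly n) : (hermStar n f).totalDegree ≤ f.totalDegree :=
  (totalDegree_rename_le _ _).trans (totalDegree_le_of_support_subset (support_map_subset _ _))

theorem homogeneousComponent_hol (d : ℕ) (p : MvPolynomial (Fin n) ℂ) :
    homogeneousComponent d (hol n p) = hol n (homogeneousComponent d p) :=
  (rename_homogeneousComponent d p).symm

theorem totalDegree_hol_le (p : MvPolynomial (Fin n) ℂ) :
    (hol n p).totalDegree ≤ p.totalDegree :=
  totalDegree_rename_le _ p

theorem totalDegree_absSq_le (f : CPoly n) : (absSq f).totalDegree ≤ 2 * f.totalDegree :=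
  calc (absSq f).totalDegree ≤ f.totalDegree + (hermStar n f).totalDegree := totalDegree_mul _ _
    _ ≤ f.totalDegree + f.totalDegree := by gcongr; exact totalDegree_hermStar_le f
    _ = 2 * f.totalDegree := (two_mul _).symm

theorem homogeneousComponent_two_mul_absSq {f : CPoly n} {d : ℕ} (hf : f.totalDegree ≤ d) :
    homogeneousComponent (2 * d) (absSq f) = absSq (homogeneousComponent d f) := by
  rw [absSq, two_mul, homogeneousComponent_add_mul hf ((totalDegree_hermStar_le f).trans hf),
    homogeneousComponent_hermStar, absSq]

theorem evalAt_hermStar (a : Fin n → ℂ) (f : CPoly n) :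
    evalAt a (hermStar n f) = starRingEnd ℂ (evalAt a f) := by
  have hswap : Sum.elim a (fun j => starRingEnd ℂ (a j)) ∘ Sum.swap =
      starRingEnd ℂ ∘ Sum.elim a fun j => starRingEnd ℂ (a j) := by
    ext (j | j) <;> simp
  simp [evalAt, evalPair, hermStar, eval_rename, hswap, eval_map, eval₂_comp]

theorem evalAt_absSq (a : Fin n → ℂ) (f : CPoly n) :
    evalAt a (absSq f) = (normSq (evalAt a f) : ℂ) := by
  rw [← mul_conj, ← evalAt_hermStar]
  exact map_mul _ _ _

theorem evalAt_hol (a : Fin n → ℂ) (p : MvPolynomial (Fin n) ℂ) :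
    evalAt a (hol n p) = eval a p :=
  eval_rename _ _ _

theorem evalAt_sum (a : Fin n → ℂ) (s : Finset ι) (f : ι → CPoly n) :
    evalAt a (∑ i ∈ s, f i) = ∑ i ∈ s, evalAt a (f i) :=
  map_sum _ _ _

theorem evalAt_sum_absSq_hol (a : Fin n → ℂ) (s : Finset ι) (p : ι → MvPolynomial (Fin n) ℂ) :
    evalAt a (∑ i ∈ s, absSq (hol n (p i))) = ((∑ i ∈ s, normSq (eval a (p i)) : ℝ) : ℂ) := by
  simp only [evalAt_sum, evalAt_absSq, evalAt_hol, ofReal_sum]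

theorem eq_zero_of_sum_absSq_hol_eq_zero {s : Finset ι} {p : ι → MvPolynomial (Fin n) ℂ}
    (h : ∑ i ∈ s, absSq (hol n (p i)) = 0) {i : ι} (hi : i ∈ s) : p i = 0 := by
  refine funext fun a => ?_
  have hsum : ∑ j ∈ s, normSq (eval a (p j)) = 0 := by
    rw [← ofReal_eq_zero, ← evalAt_sum_absSq_hol, h]
    exact map_zero _
  rw [map_zero, ← normSq_eq_zero]
  exact (Finset.sum_eq_zero_iff_of_nonneg fun j _ => normSq_nonneg _).1 hsum i hi

theorem mem_sigmaH_iff {f : CPoly n} :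
    f ∈ SigmaH n ↔
      ∃ (k : ℕ) (p : Fin k → MvPolynomial (Fin n) ℂ), f = ∑ i, absSq (hol n (p i)) :=
  Iff.rfl

theorem homogeneousComponent_two_mul_sum_absSq_hol {s : Finset ι}
    {p : ι → MvPolynomial (Fin n) ℂ} {d : ℕ} (hp : ∀ i ∈ s, (p i).totalDegree ≤ d) :
    homogeneousComponent (2 * d) (∑ i ∈ s, absSq (hol n (p i))) =
      ∑ i ∈ s, absSq (hol n (homogeneousComponent d (p i))) := by
  rw [map_sum]
  refine Finset.sum_congr rfl fun i hi => ?_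
  rw [homogeneousComponent_two_mul_absSq ((totalDegree_hol_le _).trans (hp i hi)),
    homogeneousComponent_hol]

theorem totalDegree_sum_absSq_hol {s : Finset ι} {p : ι → MvPolynomial (Fin n) ℂ} {i : ι}
    (hi : i ∈ s) (hpi : p i ≠ 0) (hmax : ∀ j ∈ s, (p j).totalDegree ≤ (p i).totalDegree) :
    (∑ j ∈ s, absSq (hol n (p j))).totalDegree = 2 * (p i).totalDegree := by
  apply le_antisymm
  · exact totalDegree_finsetSum_le fun j hj => (totalDegree_absSq_le _).trans
      (Nat.mul_le_mul_left 2 ((totalDegree_hol_le _).trans (hmax j hj)))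
  · by_contra! hlt
    have hlead := homogeneousComponent_two_mul_sum_absSq_hol hmax
    rw [homogeneousComponent_eq_zero _ _ hlt] at hlead
    exact homogeneousComponent_totalDegree_ne_zero hpi
      (eq_zero_of_sum_absSq_hol_eq_zero hlead.symm hi)

theorem exists_homogeneousComponent_totalDegree_sum_absSq_hol_eq {s : Finset ι}
    {p : ι → MvPolynomial (Fin n) ℂ} (h : ∑ i ∈ s, absSq (hol n (p i)) ≠ 0) :
    ∃ d, (∑ i ∈ s, absSq (hol n (p i))).totalDegree = 2 * d ∧
      homogeneousComponent (2 * d) (∑ i ∈ s, absSq (hol n (p i))) =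
        ∑ i ∈ s, absSq (hol n (homogeneousComponent d (p i))) := by
  have hne : ∃ i ∈ s, p i ≠ 0 := by
    contrapose! h
    exact Finset.sum_eq_zero fun i hi => by rw [h i hi, map_zero, absSq, zero_mul]
  obtain ⟨i, hi, hpi, hmax⟩ := exists_ne_zero_forall_totalDegree_le hne
  exact ⟨(p i).totalDegree, totalDegree_sum_absSq_hol hi hpi hmax,
    homogeneousComponent_two_mul_sum_absSq_hol hmax⟩

theorem absSq_hol_C_mul_X_pow (c : ℂ) (j : Fin n) (d : ℕ) :
    absSq (hol n (C c * X j ^ d)) =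
      C (normSq c : ℂ) * (X (Sum.inl j) * X (Sum.inr j)) ^ d := by
  have hhol : hol n (C c * X j ^ d) = C c * X (Sum.inl j) ^ d := by simp [hol]
  have hstar : hermStar n (C c * X (Sum.inl j) ^ d) =
      C (starRingEnd ℂ c) * X (Sum.inr j) ^ d := by simp [hermStar]
  rw [absSq, hhol, hstar, ← mul_conj, C_mul]
  ring

theorem exists_pos_sum_absSq_hol_eq {s : Finset ι} {q : ι → MvPolynomial (Fin 1) ℂ} {d : ℕ}
    (hq : ∀ i ∈ s, (q i).IsHomogeneous d) (h : ∑ i ∈ s, absSq (hol 1 (q i)) ≠ 0) :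
    ∃ a : ℝ, 0 < a ∧
      ∑ i ∈ s, absSq (hol 1 (q i)) = C (a : ℂ) * (X (Sum.inl 0) * X (Sum.inr 0)) ^ d := by
  let c i := coeff (Finsupp.single 0 d) (q i)
  have hsum : ∑ i ∈ s, absSq (hol 1 (q i)) =
      C ((∑ i ∈ s, normSq (c i) : ℝ) : ℂ) * (X (Sum.inl 0) * X (Sum.inr 0)) ^ d := by
    rw [ofReal_sum, map_sum, Finset.sum_mul]
    refine Finset.sum_congr rfl fun i hi => ?_
    rw [← absSq_hol_C_mul_X_pow]
    exact congrArg (fun r => absSq (hol 1 r)) (eq_C_mul_X_pow_of_isHomogeneous (hq i hi))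
  refine ⟨_, (Finset.sum_nonneg fun i _ => normSq_nonneg (c i)).lt_of_ne' fun hzero => h ?_, hsum⟩
  rw [hsum, hzero, ofReal_zero, C_0, zero_mul]

end AbsSq

/-- Lemma `leitformsohs`: the leading form of a nonzero `f ∈ Σ_h` again lies in `Σ_h`;
for `n = 1` it follows that `deg f = 2m` is even and `lf(f) = a·(zz̄)^m` with `a > 0`. -/
theorem statement10 (n : ℕ) (hn : 0 < n) (f : CPoly n) (hf : f ∈ SigmaH n)
    (h0 : f ≠ 0) :
    homogeneousComponent f.totalDegree f ∈ SigmaH n ∧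
    (n = 1 → ∃ (m : ℕ) (a : ℝ), 0 < a ∧ f.totalDegree = 2 * m ∧
      homogeneousComponent f.totalDegree f =
        C (a : ℂ) * (X (Sum.inl ⟨0, hn⟩) * X (Sum.inr ⟨0, hn⟩)) ^ m) := by
  obtain ⟨k, p, rfl⟩ := mem_sigmaH_iff.1 hf
  obtain ⟨d, hdeg, hlead⟩ := exists_homogeneousComponent_totalDegree_sum_absSq_hol_eq h0
  have hlead_ne := homogeneousComponent_totalDegree_ne_zero h0
  rw [hdeg, hlead] at hlead_ne ⊢
  refine ⟨mem_sigmaH_iff.2 ⟨k, _, rfl⟩, ?_⟩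
  rintro rfl
  obtain ⟨a, ha, heq⟩ := exists_pos_sum_absSq_hol_eq
    (fun i _ => homogeneousComponent_isHomogeneous d (p i)) hlead_ne
  exact ⟨d, a, ha, rfl, heq⟩

end
end
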